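/- arXiv:math/0610780 — 2 statements merged into one kernel-verified Lean document; each statement's English description precedes it below -/
import Mathlib

section
/- For n ≥ 2, the number of parking functions a of length n with a_1 < a_2 is greater than or equal to the number of parking functions of length n with a_1 = a_2. -/
/-- A parking function of length `n`: a function `a : Fin n → ℕ` such that for
every `k ≤ n`, at least `k` of the entries are `< k`.  (This forces all entries
to lie in `{0, …, n-1}`.) -/
def IsPF (n : ℕ) (a : Fin n → ℕ) : Prop :=
  ∀ k : ℕ, k ≤ n → k ≤ (Finset.univ.filter (fun i => a i < k)).card

/-!
Raising `a₂` by one injects the parking functions with `a₁ = a₂` into those with `a₁ < a₂`. If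
`a₁ = a₂ = x`, only the number of entries below `x + 1` changes. It stays large enough: at least
`x` entries are below `x`, and `a₁ = x` is one more entry below `x + 1`.
-/

section

open Finset

variable {n : ℕ} {a : Fin n → ℕ}

theorem IsPF.lt (ha : IsPF n a) (i : Fin n) : a i < n := by
  have hcard : #{i | a i < n} = #(univ : Finset (Fin n)) :=
    (card_filter_le _ _).antisymm (by simpa using ha n le_rfl)
  exact card_filter_eq_iff.mp hcard i (mem_univ i)

theorem finite_setOf_isPF (n : ℕ) : {a : Fin n → ℕ | IsPF n a}.Finite :=
  (Set.Finite.pi' fun _ => Set.finite_Iio n).subset fun _ ha i => ha.lt i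

theorem IsPF.add_single_one (ha : IsPF n a) {i j : Fin n} (hij : i ≠ j) (heq : a i = a j) :
    IsPF n (a + Pi.single j 1) := by
  intro k hk
  rcases eq_or_ne k (a j + 1) with rfl | hkj
  · have hi : i ∉ ({l | a l < a j} : Finset (Fin n)) := by simp [heq]
    calc a j + 1
        ≤ #{l | a l < a j} + 1 := by
          gcongr
          exact ha (a j) (by lia)
      _ = #(insert i ({l | a l < a j} : Finset (Fin n))) := (card_insert_of_notMem hi).symm
      _ ≤ #{l | (a + Pi.single j 1 : Fin n → ℕ) l < a j + 1} := by
          refine card_le_card (insert_subset (by simp [hij, heq]) ?_)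
          refine monotone_filter_right _ fun l _ (hl : a l < a j) => ?_
          have hlj : l ≠ j := by rintro rfl; exact hl.false
          simpa [hlj] using hl.le
  · refine (ha k hk).trans
      (card_le_card (monotone_filter_right _ fun l _ (hl : a l < k) => ?_))
    rcases eq_or_ne l j with rfl | hlj
    · simpa using lt_of_le_of_ne hl hkj.symm
    · simpa [hlj] using hl

end

/-- The number of parking functions of length `n` with `a_1 < a_2` is at least
the number with `a_1 = a_2`. -/
theorem lt_parking_count_ge_eq (n : ℕ) (hn : 2 ≤ n) :
    Set.ncard {a : Fin n → ℕ | IsPF n a ∧ a ⟨0, by omega⟩ = a ⟨1, by omega⟩} ≤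
      Set.ncard {a : Fin n → ℕ | IsPF n a ∧ a ⟨0, by omega⟩ < a ⟨1, by omega⟩} := by
  have h01 : (⟨0, by omega⟩ : Fin n) ≠ ⟨1, by omega⟩ := by simp
  refine Set.ncard_le_ncard_of_injOn (· + Pi.single ⟨1, by omega⟩ 1) ?_
    (add_left_injective _).injOn ((finite_setOf_isPF n).subset fun _ ha => ha.1)
  rintro a ⟨ha, heq⟩
  exact ⟨ha.add_single_one h01 heq, by simp [heq]⟩
end

section
/- For n ≥ 2, the number of regions R of the Shi arrangement S_n such that x_1 − x_2 < 0 for all x ∈ R is greater than or equal to the number of regions R such that 0 < x_1 − x_2 < 1 for all x ∈ R. -/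
/-!
Interchanging the adjacent coordinates `x_p` and `x_q` permutes the hyperplanes of the Shi
arrangement other than `x_p - x_q = 0` and `x_p - x_q = 1`, and it sends the strip
`0 < x_p - x_q < 1` to the strip `-1 < x_p - x_q < 0`, which avoids these two. Regions are the
fibres of the sign vector, and all points of the strip have the same signs at the two exceptional
hyperplanes, so the sign vector of the image of a point of the strip determines that of the point.
Hence the interchange induces an injection on regions.
-/

/-- The complement of the union of the hyperplanes of the Shi arrangement `S_n`:
the hyperplanes are `x i - x j = c` for `i < j` and `c ∈ {0, 1}`. -/
def shiComp (n : ℕ) : Set (Fin n → ℝ) :=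
  {x | ∀ i j : Fin n, i < j → x i - x j ≠ 0 ∧ x i - x j ≠ 1}

/-- A region of the Shi arrangement: a connected component of the complement of
the union of the hyperplanes. -/
def IsShiRegion (n : ℕ) (R : Set (Fin n → ℝ)) : Prop :=
  ∃ x ∈ shiComp n, R = connectedComponentIn (shiComp n) x

open Set

lemma ncard_image_le_ncard_image {α β γ δ : Type*} {f : α → γ} {f' : β → δ} {A : Set α}
    {B : Set β} {g : α → β} (hB : (f' '' B).Finite) (hg : MapsTo g A B)
    (hinj : ∀ x ∈ A, ∀ y ∈ A, f' (g x) = f' (g y) → f x = f y) :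
    (f '' A).ncard ≤ (f' '' B).ncard := by
  obtain ⟨A', hA', hbij⟩ := exists_subset_bijOn A f
  rw [← hbij.image_eq, hbij.injOn.ncard_image]
  exact ncard_le_ncard_of_injOn (f' ∘ g) (fun x hx => mem_image_of_mem f' (hg (hA' hx)))
    (fun x hx y hy hxy => hbij.injOn hx hy (hinj x (hA' hx) y (hA' hy) hxy)) hB

lemma setOf_component_forall_eq_image {X : Type*} [TopologicalSpace X] {C : Set X} {P : X → Prop}
    (hP : ∀ x ∈ C, P x → ∀ y ∈ connectedComponentIn C x, P y) :
    {R | (∃ x ∈ C, R = connectedComponentIn C x) ∧ ∀ y ∈ R, P y} =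
      connectedComponentIn C '' {x ∈ C | P x} := by
  ext R
  constructor
  · rintro ⟨⟨x, hx, rfl⟩, hR⟩
    exact ⟨x, ⟨hx, hR x (mem_connectedComponentIn hx)⟩, rfl⟩
  · rintro ⟨x, ⟨hx, hPx⟩, rfl⟩
    exact ⟨⟨x, hx, rfl⟩, hP x hx hPx⟩

lemma swap_lt_swap_of_covBy {α : Type*} [LinearOrder α] {a b i j : α} (hab : a ⋖ b)
    (hij : i < j) (hne : ¬(i = a ∧ j = b)) : Equiv.swap a b i < Equiv.swap a b j := by
  have hle : ∀ k, k < b → k ≤ a := fun k => hab.le_of_lt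
  have hge : ∀ k, a < k → b ≤ k := fun k => hab.ge_of_gt
  have hlt : a < b := hab.lt
  simp only [Equiv.swap_apply_def]
  grind

section Arrangement

variable {ι E : Type*} [AddCommGroup E] [Module ℝ E] [TopologicalSpace E]

/-- The complement of the arrangement of the hyperplanes `f i = 0`, where each hyperplane is given
by an affine functional. -/
def arrangementCompl (f : ι → E →ᴬ[ℝ] ℝ) : Set E :=
  {x | ∀ i, f i x ≠ 0}

/-- The sign vector of a point with respect to the hyperplanes `f i = 0`, recording for each of
them the side on which the point lies. -/
noncomputable def signVector (f : ι → E →ᴬ[ℝ] ℝ) (x : E) : ι → SignType :=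
  fun i => SignType.sign (f i x)

variable {f : ι → E →ᴬ[ℝ] ℝ} {x y : E}

lemma mem_arrangementCompl_of_signVector_eq (hx : x ∈ arrangementCompl f)
    (hxy : signVector f y = signVector f x) : y ∈ arrangementCompl f := fun i => by
  have hsign : SignType.sign (f i y) = SignType.sign (f i x) := congrFun hxy i
  rw [← sign_ne_zero, hsign]
  exact sign_ne_zero.mpr (hx i)

lemma convex_setOf_signVector_eq (f : ι → E →ᴬ[ℝ] ℝ) (v : ι → SignType) :
    Convex ℝ {x | signVector f x = v} := by
  have hfiber : {x | signVector f x = v} = ⋂ i, f i ⁻¹' (SignType.sign ⁻¹' {v i}) := by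
    ext x
    simp [signVector, funext_iff]
  rw [hfiber]
  exact convex_iInter fun i =>
    (ordConnected_singleton.preimage_mono SignType.sign.monotone).convex.affine_preimage
      (f i : E →ᵃ[ℝ] ℝ)

lemma signVector_eq_of_isPreconnected {s : Set E} (hs : IsPreconnected s)
    (hsf : s ⊆ arrangementCompl f) (hx : x ∈ s) (hy : y ∈ s) :
    signVector f x = signVector f y := by
  funext i
  have hcont : ContinuousOn (fun z => SignType.sign (f i z)) s := fun z hz =>
    ((continuousAt_sign_of_ne_zero (hsf hz i)).comp
      (f i).continuous.continuousAt).continuousWithinAt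
  exact hs.constant hcont hx hy

variable [ContinuousAdd E] [ContinuousSMul ℝ E]

theorem connectedComponentIn_arrangementCompl (hx : x ∈ arrangementCompl f) :
    connectedComponentIn (arrangementCompl f) x = {y | signVector f y = signVector f x} := by
  apply Subset.antisymm
  · exact fun y hy => signVector_eq_of_isPreconnected isPreconnected_connectedComponentIn
      (connectedComponentIn_subset _ _) hy (mem_connectedComponentIn hx)
  · exact (convex_setOf_signVector_eq f _).isPreconnected.subset_connectedComponentIn rfl
      fun y hy => mem_arrangementCompl_of_signVector_eq hx hy

lemma finite_components_arrangementCompl [Finite ι] (f : ι → E →ᴬ[ℝ] ℝ) :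
    (connectedComponentIn (arrangementCompl f) '' arrangementCompl f).Finite := by
  have hfactor : connectedComponentIn (arrangementCompl f) '' arrangementCompl f =
      (fun v => {y | signVector f y = v}) '' (signVector f '' arrangementCompl f) := by
    rw [image_image]
    exact image_congr fun x hx => connectedComponentIn_arrangementCompl hx
  rw [hfactor]
  exact (toFinite _).image _

end Arrangement

section Shi

variable {n : ℕ}

/-- The affine functionals `x i - x j - c`, for `i < j` and `c ∈ {0, 1}`, whose zero sets are the
hyperplanes of the Shi arrangement. The index `((i, j), c)` takes `c` in `Fin 2`. -/
noncomputable def shiFunctional (n : ℕ) (a : {ij : Fin n × Fin n // ij.1 < ij.2} × Fin 2) :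
    (Fin n → ℝ) →ᴬ[ℝ] ℝ :=
  (ContinuousLinearMap.proj (R := ℝ) (φ := fun _ : Fin n => ℝ) a.1.1.1 -
      ContinuousLinearMap.proj a.1.1.2).toContinuousAffineMap -
    ContinuousAffineMap.const ℝ (Fin n → ℝ) ((a.2 : ℕ) : ℝ)

lemma shiFunctional_apply (a : {ij : Fin n × Fin n // ij.1 < ij.2} × Fin 2) (x : Fin n → ℝ) :
    shiFunctional n a x = x a.1.1.1 - x a.1.1.2 - ((a.2 : ℕ) : ℝ) :=
  rfl

lemma shiComp_eq_arrangementCompl (n : ℕ) : shiComp n = arrangementCompl (shiFunctional n) := by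
  ext x
  simp [shiComp, arrangementCompl, shiFunctional_apply, sub_eq_zero, Fin.forall_fin_two]

lemma signVector_shiFunctional_eq_iff {x y : Fin n → ℝ} :
    signVector (shiFunctional n) x = signVector (shiFunctional n) y ↔
      ∀ i j : Fin n, i < j → SignType.sign (x i - x j) = SignType.sign (y i - y j) ∧
        SignType.sign (x i - x j - 1) = SignType.sign (y i - y j - 1) := by
  simp [signVector, funext_iff, shiFunctional_apply, Fin.forall_fin_two]

lemma connectedComponentIn_shiComp {x : Fin n → ℝ} (hx : x ∈ shiComp n) :
    connectedComponentIn (shiComp n) x =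
      {y | signVector (shiFunctional n) y = signVector (shiFunctional n) x} := by
  rw [shiComp_eq_arrangementCompl] at hx ⊢
  exact connectedComponentIn_arrangementCompl hx

lemma finite_components_shiComp (n : ℕ) :
    (connectedComponentIn (shiComp n) '' shiComp n).Finite := by
  rw [shiComp_eq_arrangementCompl]
  exact finite_components_arrangementCompl _

variable {p q : Fin n} {x y : Fin n → ℝ}

lemma sub_neg_of_mem_component (hpq : p < q) (hx : x ∈ shiComp n) (hxpq : x p - x q < 0)
    (hy : y ∈ connectedComponentIn (shiComp n) x) : y p - y q < 0 := by
  rw [connectedComponentIn_shiComp hx] at hy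
  have hsign := (signVector_shiFunctional_eq_iff.mp hy p q hpq).1
  rw [sign_neg hxpq] at hsign
  exact sign_eq_neg_one_iff.mp hsign

lemma sub_pos_and_sub_lt_one_of_mem_component (hpq : p < q) (hx : x ∈ shiComp n)
    (hxpq : 0 < x p - x q ∧ x p - x q < 1)
    (hy : y ∈ connectedComponentIn (shiComp n) x) : 0 < y p - y q ∧ y p - y q < 1 := by
  rw [connectedComponentIn_shiComp hx] at hy
  obtain ⟨hsign₀, hsign₁⟩ := signVector_shiFunctional_eq_iff.mp hy p q hpq
  rw [sign_pos hxpq.1] at hsign₀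
  rw [sign_neg (sub_neg.mpr hxpq.2)] at hsign₁
  exact ⟨sign_eq_one_iff.mp hsign₀, sub_neg.mp (sign_eq_neg_one_iff.mp hsign₁)⟩

lemma comp_swap_mem_shiComp (hpq : p ⋖ q) (hx : x ∈ shiComp n) (hxpq : 0 < x p - x q) :
    x ∘ Equiv.swap p q ∈ shiComp n := by
  intro i j hij
  by_cases hne : i = p ∧ j = q
  · obtain ⟨rfl, rfl⟩ := hne
    simp only [Function.comp_apply, Equiv.swap_apply_left, Equiv.swap_apply_right]
    constructor <;> linarith
  · exact hx _ _ (swap_lt_swap_of_covBy hpq hij hne)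

lemma signVector_eq_of_comp_swap (hpq : p ⋖ q) (hx : 0 < x p - x q ∧ x p - x q < 1)
    (hy : 0 < y p - y q ∧ y p - y q < 1)
    (h : signVector (shiFunctional n) (x ∘ Equiv.swap p q) =
      signVector (shiFunctional n) (y ∘ Equiv.swap p q)) :
    signVector (shiFunctional n) x = signVector (shiFunctional n) y := by
  rw [signVector_shiFunctional_eq_iff] at h ⊢
  intro i j hij
  by_cases hne : i = p ∧ j = q
  · obtain ⟨rfl, rfl⟩ := hne
    rw [sign_pos hx.1, sign_pos hy.1, sign_neg (sub_neg.mpr hx.2), sign_neg (sub_neg.mpr hy.2)]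
    exact ⟨rfl, rfl⟩
  · simpa using h _ _ (swap_lt_swap_of_covBy hpq hij hne)

lemma component_eq_of_comp_swap (hpq : p ⋖ q)
    (hxC : x ∈ shiComp n) (hx : 0 < x p - x q ∧ x p - x q < 1)
    (hyC : y ∈ shiComp n) (hy : 0 < y p - y q ∧ y p - y q < 1)
    (h : connectedComponentIn (shiComp n) (x ∘ Equiv.swap p q) =
      connectedComponentIn (shiComp n) (y ∘ Equiv.swap p q)) :
    connectedComponentIn (shiComp n) x = connectedComponentIn (shiComp n) y := by
  have hxswap := mem_connectedComponentIn (comp_swap_mem_shiComp hpq hxC hx.1)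
  rw [h, connectedComponentIn_shiComp (comp_swap_mem_shiComp hpq hyC hy.1)] at hxswap
  rw [connectedComponentIn_shiComp hxC, connectedComponentIn_shiComp hyC,
    signVector_eq_of_comp_swap hpq hx hy hxswap]

theorem shi_regions_lt_ge_mid_general (hpq : p ⋖ q) :
    Set.ncard {R : Set (Fin n → ℝ) | IsShiRegion n R ∧
        ∀ x ∈ R, 0 < x p - x q ∧ x p - x q < 1} ≤
      Set.ncard {R : Set (Fin n → ℝ) | IsShiRegion n R ∧ ∀ x ∈ R, x p - x q < 0} := by
  simp only [IsShiRegion]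
  rw [setOf_component_forall_eq_image fun x hx hxpq y =>
      sub_pos_and_sub_lt_one_of_mem_component hpq.lt hx hxpq,
    setOf_component_forall_eq_image fun x hx hxpq y => sub_neg_of_mem_component hpq.lt hx hxpq]
  refine ncard_image_le_ncard_image (g := fun x => x ∘ Equiv.swap p q)
    ((finite_components_shiComp n).subset (image_mono (sep_subset _ _))) ?mapsTo ?injective
  case mapsTo =>
    rintro x ⟨hxC, hx⟩
    refine ⟨comp_swap_mem_shiComp hpq hxC hx.1, ?_⟩
    simpa using hx.1
  case injective =>
    rintro x ⟨hxC, hx⟩ y ⟨hyC, hy⟩ h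
    exact component_eq_of_comp_swap hpq hxC hx hyC hy h

end Shi

/-- The number of Shi regions with `x_1 - x_2 < 0` is at least the number with
`0 < x_1 - x_2 < 1`. -/
theorem shi_regions_lt_ge_mid (n : ℕ) (hn : 2 ≤ n) :
    Set.ncard {R : Set (Fin n → ℝ) | IsShiRegion n R ∧
        ∀ x ∈ R, 0 < x ⟨0, by omega⟩ - x ⟨1, by omega⟩ ∧
          x ⟨0, by omega⟩ - x ⟨1, by omega⟩ < 1} ≤
      Set.ncard {R : Set (Fin n → ℝ) | IsShiRegion n R ∧
        ∀ x ∈ R, x ⟨0, by omega⟩ - x ⟨1, by omega⟩ < 0} :=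
  shi_regions_lt_ge_mid_general (Fin.covBy_iff.mpr (Nat.covBy_iff_add_one_eq.mpr rfl))
end
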